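/- arXiv:2411.11133 — 2 statements merged into one kernel-verified Lean document; each statement's English description precedes it below -/
import Mathlib

section
/- Let P = (X, ≺) be a finite interval order and let A = {a_1, …, a_t} (t ≥ 2) be an antichain of P. Then the following are equivalent: (1) in every interval representation {I_x : x ∈ X} of P, the intervals {I_a : a ∈ A} are linearly ordered by strict containment (i.e., for any two distinct a, b ∈ A, either I_a ⊊ I_b or I_b ⊊ I_a); (2) the elements of A can be enumerated as b_1, …, b_t so that b_i → b_{i+1} is an arc of the PP digraph of P for every 1 ≤ i < t. -/
/-!
Being joined by an arc is equivalent to being nested in every representation, for a pair of distinct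
incomparable elements `u, v`. If `u → v` via `b ≺ u ≺ a`, then `ℓ v ≤ r b < ℓ u` and
`r u < ℓ a ≤ r v` in every representation (`PPArc.endpoints`); this relation between intervals is
transitive, so a path of arcs gives a chain.

Conversely, suppose neither `u → v` nor `v → u`. Since predecessor sets are linearly ordered by
inclusion in an interval order, and likewise successor sets, one may assume that every predecessor
of `u` precedes `v` and every successor of `v` succeeds `u`. Then the endpoints of `v` may be raised
to at least those of `u` without changing the order, and a small further shift to the right makes
both comparisons strict (`exists_rep_lt`). Neither interval contains the other, so the pair
is not nested in that representation. Hence if all pairs of `A` are always nested, all pairs are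
joined by arcs, and sorting `A` by right endpoint in any one representation yields a path.
-/

/-- An arc `u → v` of the PP digraph of a strict order `lt`: there exist
`a, b` with `b ≺ u ≺ a` such that `v` is incomparable to (distinct from and
unrelated to) each of `b`, `u`, `a`. -/
def PPArc {X : Type*} (lt : X → X → Prop) (u v : X) : Prop :=
  ∃ a b : X, lt b u ∧ lt u a ∧
    (v ≠ b ∧ ¬ lt v b ∧ ¬ lt b v) ∧
    (v ≠ u ∧ ¬ lt v u ∧ ¬ lt u v) ∧
    (v ≠ a ∧ ¬ lt v a ∧ ¬ lt a v)

/-- The pair `(ℓ, r)` of endpoint functions is an interval representation of `lt`. -/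
def IsRep {X : Type*} (lt : X → X → Prop) (ℓ r : X → ℝ) : Prop :=
  (∀ x, ℓ x ≤ r x) ∧ ∀ x y, lt x y ↔ r x < ℓ y

theorem PPArc.endpoints {X : Type*} {lt : X → X → Prop} {ℓ r : X → ℝ} (h : IsRep lt ℓ r)
    {u v : X} (huv : PPArc lt u v) : ℓ v < ℓ u ∧ r u < r v := by
  obtain ⟨a, b, hbu, hua, ⟨-, -, hbv⟩, -, -, hva, -⟩ := huv
  rw [h.2] at hbu hua
  rw [h.2, not_lt] at hbv hva
  exact ⟨by linarith, by linarith⟩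

/-- Finitely many strict inequalities `r x < ℓ y` leave a uniform positive gap. -/
theorem IsRep.exists_gap {X : Type*} [Finite X] {lt : X → X → Prop} {ℓ r : X → ℝ}
    (h : IsRep lt ℓ r) : ∃ ε > 0, ∀ x y, lt x y → r x + 2 * ε < ℓ y := by
  have key : ∀ᶠ ε : ℝ in nhdsWithin 0 (Set.Ioi 0), ∀ x y, lt x y → r x + 2 * ε < ℓ y := by
    refine Filter.eventually_all.2 fun x => Filter.eventually_all.2 fun y => ?_
    by_cases hxy : lt x y
    · have hpos : 0 < (ℓ y - r x) / 2 := by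
        have := (h.2 x y).1 hxy
        linarith
      filter_upwards [Ioo_mem_nhdsGT hpos] with ε hε _
      linarith [hε.2]
    · exact Filter.Eventually.of_forall fun _ h' => absurd h' hxy
  obtain ⟨ε, h1, h2⟩ := (key.and self_mem_nhdsWithin).exists
  exact ⟨ε, h2, h1⟩

/-- If every predecessor of `u` precedes `v` and every successor of `v` succeeds `u`, some
representation places `u` strictly to the left of `v` at both ends. -/
theorem exists_rep_lt {X : Type*} [Finite X] {lt : X → X → Prop} {ℓ r : X → ℝ}
    (h : IsRep lt ℓ r) {u v : X} (hne : u ≠ v)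
    (hP : ∀ x, lt x u → lt x v) (hS : ∀ x, lt v x → lt u x) :
    ∃ ℓ' r' : X → ℝ, IsRep lt ℓ' r' ∧ ℓ' u < ℓ' v ∧ r' u < r' v := by
  classical
  obtain ⟨ε, hε, hgap⟩ := h.exists_gap
  -- Right endpoints grow by `ε` everywhere, which makes room to move `ℓ v` by `ε`;
  -- `r v` then has to grow by `2 * ε` in order to pass `r u + ε`.
  refine ⟨fun x => if x = v then max (ℓ v) (ℓ u) + ε else ℓ x,
    fun x => if x = v then max (r v) (r u) + 2 * ε else r x + ε, ⟨fun x => ?_, fun x y => ?_⟩,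
    ?_, ?_⟩
  · have h1 := h.1 x
    have h2 := max_le_max (h.1 v) (h.1 u)
    dsimp only
    split_ifs <;> linarith
  · dsimp only
    have hl : ∀ y, ℓ y ≤ if y = v then max (ℓ v) (ℓ u) + ε else ℓ y := by
      intro y
      split_ifs with hy
      · subst hy; linarith [le_max_left (ℓ y) (ℓ u)]
      · exact le_rfl
    have hr : ∀ x, r x + ε ≤ if x = v then max (r v) (r u) + 2 * ε else r x + ε := by
      intro x
      split_ifs with hx
      · subst hx; linarith [le_max_left (r x) (r u)]
      · exact le_rfl
    constructor
    · intro hxy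
      refine lt_of_lt_of_le ?_ (hl y)
      split_ifs with hx
      · subst hx
        have h1 := hgap _ _ hxy
        have h2 := hgap _ _ (hS _ hxy)
        rcases max_cases (r x) (r u) with h3 | h3 <;> linarith
      · linarith [hgap _ _ hxy]
    · intro hlt
      have h0 := lt_of_le_of_lt (hr x) hlt
      split_ifs at h0 with hy
      · subst hy
        rcases lt_max_iff.1 (by linarith : r x < max (ℓ y) (ℓ u)) with h1 | h1
        · exact (h.2 _ _).2 h1
        · exact hP _ ((h.2 _ _).2 h1)
      · exact (h.2 _ _).2 (by linarith)
  · simp only [if_neg hne, if_true]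
    linarith [le_max_right (ℓ v) (ℓ u)]
  · simp only [if_neg hne, if_true]
    linarith [le_max_right (r v) (r u)]

/-- An interval strictly to the left of another at both ends is not nested with it. -/
theorem not_nested_of_lt {a b c d : ℝ} (hab : a ≤ b) (hcd : c ≤ d) (h1 : a < c) (h2 : b < d) :
    ¬ (Set.Icc a b ⊂ Set.Icc c d ∨ Set.Icc c d ⊂ Set.Icc a b) := by
  rintro (h | h)
  · exact absurd ((Set.Icc_subset_Icc_iff hab).1 h.1).1 (not_le.2 h1)
  · exact absurd ((Set.Icc_subset_Icc_iff hcd).1 h.1).2 (not_le.2 h2)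

/-- Without an arc `u → v` between incomparable elements, the predecessors of `u` are among those of
`v`, or the successors of `u` are among those of `v`. -/
theorem pred_or_succ_of_not_arc {X : Type*} {lt : X → X → Prop} {ℓ r : X → ℝ}
    (h : IsRep lt ℓ r) {u v : X} (hne : u ≠ v) (huv : ¬ lt u v) (hvu : ¬ lt v u)
    (harc : ¬ PPArc lt u v) :
    (∀ x, lt x u → lt x v) ∨ (∀ x, lt u x → lt v x) := by
  have htrans : ∀ x y z, lt x y → lt y z → lt x z := by
    intro x y z hxy hyz
    rw [h.2] at *
    linarith [h.1 y]
  by_contra! hcon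
  obtain ⟨⟨b, hbu, hbv⟩, a, hua, hva⟩ := hcon
  refine harc ⟨a, b, hbu, hua, ⟨?_, ?_, hbv⟩, ⟨hne.symm, hvu, huv⟩, ⟨?_, hva, ?_⟩⟩
  · rintro rfl; exact hvu hbu
  · exact fun hvb => hvu (htrans _ _ _ hvb hbu)
  · rintro rfl; exact huv hua
  · exact fun hav => huv (htrans _ _ _ hua hav)

/-- Incomparable elements that are nested in every representation are joined by an arc. -/
theorem arc_or_arc_of_nested {X : Type*} [Finite X] {lt : X → X → Prop} {ℓ r : X → ℝ}
    (h : IsRep lt ℓ r) {u v : X} (hne : u ≠ v) (huv : ¬ lt u v) (hvu : ¬ lt v u)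
    (hnest : ∀ ℓ r : X → ℝ, IsRep lt ℓ r → Set.Icc (ℓ u) (r u) ⊂ Set.Icc (ℓ v) (r v) ∨
      Set.Icc (ℓ v) (r v) ⊂ Set.Icc (ℓ u) (r u)) :
    PPArc lt u v ∨ PPArc lt v u := by
  by_contra! hcon
  have hno1 : ¬ ((∀ x, lt x u → lt x v) ∧ (∀ x, lt v x → lt u x)) := by
    rintro ⟨hP, hS⟩
    obtain ⟨ℓ', r', hrep, h1, h2⟩ := exists_rep_lt h hne hP hS
    exact not_nested_of_lt (hrep.1 u) (hrep.1 v) h1 h2 (hnest _ _ hrep)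
  have hno2 : ¬ ((∀ x, lt x v → lt x u) ∧ (∀ x, lt u x → lt v x)) := by
    rintro ⟨hP, hS⟩
    obtain ⟨ℓ', r', hrep, h1, h2⟩ := exists_rep_lt h hne.symm hP hS
    exact not_nested_of_lt (hrep.1 v) (hrep.1 u) h1 h2 (hnest _ _ hrep).symm
  -- Predecessor sets are linearly ordered by left endpoints, successor sets by right endpoints.
  have hP : (∀ x, lt x u → lt x v) ∨ (∀ x, lt x v → lt x u) := by
    simp only [h.2]
    exact (le_total (ℓ u) (ℓ v)).imp (fun h x hx => hx.trans_le h) (fun h x hx => hx.trans_le h)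
  have hS : (∀ x, lt u x → lt v x) ∨ (∀ x, lt v x → lt u x) := by
    simp only [h.2]
    exact (le_total (r v) (r u)).imp (fun h x hx => h.trans_lt hx) (fun h x hx => h.trans_lt hx)
  have h1 := pred_or_succ_of_not_arc h hne huv hvu hcon.1
  have h2 := pred_or_succ_of_not_arc h hne.symm hvu huv hcon.2
  tauto

/-- For a finite interval order `(X, lt)` and an antichain `A` with at least
two elements, the intervals of `A` form a nested chain (are linearly ordered
by strict containment) in every interval representation of the order if and
only if the elements of `A` can be enumerated so that consecutive elements are
joined by arcs of the PP digraph. -/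
theorem nested_iff_pp_path {X : Type*} [Fintype X] [DecidableEq X]
    (lt : X → X → Prop)
    (hio : ∃ ℓ r : X → ℝ, (∀ x, ℓ x ≤ r x) ∧ ∀ x y, lt x y ↔ r x < ℓ y)
    (A : Finset X) (ht : 2 ≤ A.card)
    (hA : ∀ a ∈ A, ∀ b ∈ A, a ≠ b → ¬ lt a b ∧ ¬ lt b a) :
    (∀ ℓ r : X → ℝ, (∀ x, ℓ x ≤ r x) → (∀ x y, lt x y ↔ r x < ℓ y) →
        ∀ a ∈ A, ∀ b ∈ A, a ≠ b →
          Set.Icc (ℓ a) (r a) ⊂ Set.Icc (ℓ b) (r b) ∨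
          Set.Icc (ℓ b) (r b) ⊂ Set.Icc (ℓ a) (r a)) ↔
    (∃ l : List X, l.Nodup ∧ l.toFinset = A ∧ l.Chain' (PPArc lt)) := by
  constructor
  · intro hnest
    obtain ⟨ℓ, r, hrep⟩ := hio
    have hrep' : IsRep lt ℓ r := hrep
    let R : X → X → Prop := fun x y => r x ≤ r y
    have : DecidableRel R := Classical.decRel R
    have : Std.Total R := ⟨fun x y => le_total (r x) (r y)⟩
    have : IsTrans X R := ⟨fun _ _ _ h1 h2 => le_trans h1 h2⟩
    have hperm := List.perm_insertionSort R A.toList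
    have hnodup : (A.toList.insertionSort R).Nodup := hperm.nodup_iff.2 A.nodup_toList
    have hmem : ∀ x, x ∈ A.toList.insertionSort R ↔ x ∈ A := fun x => by
      rw [hperm.mem_iff, Finset.mem_toList]
    refine ⟨A.toList.insertionSort R, hnodup, by ext x; rw [List.mem_toFinset, hmem], ?_⟩
    refine List.Pairwise.isChain ?_
    refine ((List.pairwise_insertionSort R A.toList).and hnodup).imp_of_mem ?_
    rintro x y hx hy ⟨hle, hne⟩
    have hx' := (hmem x).1 hx
    have hy' := (hmem y).1 hy
    obtain ⟨hxy, hyx⟩ := hA x hx' y hy' hne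
    refine (arc_or_arc_of_nested hrep' hne hxy hyx
      fun ℓ r h => hnest ℓ r h.1 h.2 x hx' y hy' hne).resolve_right fun harc => ?_
    exact absurd (harc.endpoints hrep').2 (not_lt.2 hle)
  · rintro ⟨l, -, rfl, hchain⟩ ℓ r hle hlt a ha b hb hab
    have hrep : IsRep lt ℓ r := ⟨hle, hlt⟩
    let S : X → X → Prop := fun x y => ℓ y < ℓ x ∧ r x < r y
    have : IsTrans X S := ⟨fun _ _ _ h1 h2 => ⟨h2.1.trans h1.1, h1.2.trans h2.2⟩⟩
    have hpair : l.Pairwise S :=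
      List.isChain_iff_pairwise.1 (hchain.imp fun x y h => h.endpoints hrep)
    have hS : ∀ x y, S x y → Set.Icc (ℓ x) (r x) ⊂ Set.Icc (ℓ y) (r y) := fun x y h =>
      ⟨Set.Icc_subset_Icc h.1.le h.2.le, fun hsub =>
        absurd ((Set.Icc_subset_Icc_iff (hle y)).1 hsub).1 (not_le.2 h.1)⟩
    have hsymm : l.Pairwise fun x y => S x y ∨ S y x := hpair.imp Or.inl
    have : Std.Symm fun x y => S x y ∨ S y x := ⟨fun _ _ => Or.symm⟩
    exact (hsymm.forall (List.mem_toFinset.1 ha) (List.mem_toFinset.1 hb) hab).imp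
      (hS a b) (hS b a)
end

section
/- Let P = (X, ≺) be a finite interval order that contains a chain of 3 elements but no chain of 4 elements (a height-3 interval order). Then P admits an interval representation using at most 2 distinct interval lengths if and only if the PP digraph of P contains no directed path on 3 vertices, i.e., there are no elements x, y, z ∈ X with arcs x → y and y → z (equivalently, P has depth at most 2). -/
/-! ### Placing points with prescribed unit distances -/

/-- Unit-distance realization of a monotone relation `R` on an initial segment of `ℕ`: there are
increasing reals in which `R a b` means that `b` lies more than one unit to the right of `a`. The
points are placed one after another, each new one having only finitely many strict bounds. -/
theorem exists_unit_placement (R : ℕ → ℕ → Prop)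
    (hmono : ∀ a a' b b', a' ≤ a → b ≤ b' → R a b → R a' b') (hirr : ∀ a, ¬ R a a) (n : ℕ) :
    ∃ p : ℕ → ℝ, ∀ a < n, ∀ b < n, (a < b → p a < p b) ∧ (R a b → p a + 1 < p b) ∧
      (¬ R a b → p b < p a + 1) := by
  classical
  induction n with
  | zero => exact ⟨fun _ => 0, fun a ha => absurd ha (Nat.not_lt_zero a)⟩
  | succ n ih =>
    obtain ⟨p, hp⟩ := ih
    obtain ⟨v, hlo, hhi⟩ := Order.exists_between_finsets
      ((Finset.range n).image p ∪ ((Finset.range n).filter (fun a => R a n)).image (fun a => p a + 1))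
      (((Finset.range n).filter (fun a => ¬ R a n)).image (fun a => p a + 1)) (by
        intro x hx y hy
        simp only [Finset.mem_union, Finset.mem_image, Finset.mem_filter, Finset.mem_range] at hx hy
        obtain ⟨b, ⟨hb, hbn⟩, rfl⟩ := hy
        rcases hx with ⟨a, ha, rfl⟩ | ⟨a, ⟨ha, han⟩, rfl⟩
        · exact (hp b hb a ha).2.2 fun h => hbn (hmono b b a n le_rfl ha.le h)
        · have hab : a < b := by
            by_contra h
            exact hbn (hmono a b n n (not_lt.mp h) le_rfl han)
          linarith [(hp a ha b hb).1 hab])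
    have h1 : ∀ a < n, p a < v := fun a ha => hlo _ (by
      simp only [Finset.mem_union, Finset.mem_image, Finset.mem_range]
      exact Or.inl ⟨a, ha, rfl⟩)
    have h2 : ∀ a < n, R a n → p a + 1 < v := fun a ha h => hlo _ (by
      simp only [Finset.mem_union, Finset.mem_image, Finset.mem_filter, Finset.mem_range]
      exact Or.inr ⟨a, ⟨ha, h⟩, rfl⟩)
    have h3 : ∀ a < n, ¬ R a n → v < p a + 1 := fun a ha h => hhi _ (by
      simp only [Finset.mem_image, Finset.mem_filter, Finset.mem_range]
      exact ⟨a, ⟨ha, h⟩, rfl⟩)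
    refine ⟨fun k => if k = n then v else p k, fun a ha b hb => ?_⟩
    rcases Nat.lt_succ_iff_lt_or_eq.mp ha with ha | rfl <;>
      rcases Nat.lt_succ_iff_lt_or_eq.mp hb with hb | rfl
    · simpa [ha.ne, hb.ne] using hp a ha b hb
    · simpa [ha.ne] using ⟨fun _ => h1 a ha, h2 a ha, h3 a ha⟩
    · have hR : ¬ R a b := fun h => hirr a (hmono a a b a le_rfl hb.le h)
      simp only [hb.ne, if_true, if_false]
      exact ⟨fun h => absurd h hb.not_gt, fun h => absurd h hR, fun _ => by linarith [h1 b hb]⟩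
    · simp [hirr]

/-- Right endpoints for short elements (`S`) and long elements (not `S`), the latter longer by one:
they decrease with `Q`, and the resulting left endpoints `p x` (short) and `p x - 1` (long)
increase with `P`. The hypotheses exclude an element strictly exceeding another one in both `P`
and `Q` when the first is long, or when both are short. -/
theorem exists_right_endpoints {X : Type*} [Fintype X] (S : X → Prop) (P Q : X → ℕ) (N : ℕ)
    (hP : ∀ x, P x ≤ N) (hQ : ∀ x, Q x ≤ N)
    (hT : ∀ t y, ¬ S t → P y < P t → Q y < Q t → False)
    (hS : ∀ s s', S s → S s' → P s' < P s → Q s' < Q s → False) :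
    ∃ p : X → ℝ, (∀ x y, Q y < Q x → p x < p y) ∧
      (∀ x y, (S x ↔ S y) → P x < P y → p x < p y) ∧
      (∀ s t, S s → ¬ S t → P s < P t → p s + 1 < p t) ∧
      (∀ s t, S s → ¬ S t → P t < P s → p t < p s + 1) := by
  -- Numerical encoding of the lexicographic order: `Q` decreasing, then `P` increasing.
  obtain ⟨f, hf⟩ : ∃ f : X → ℕ, ∀ x, f x = (N - Q x) * (N + 1) + P x := ⟨_, fun _ => rfl⟩
  have hfQ : ∀ x y, Q y < Q x → f x < f y := by
    intro x y h
    have h1 : N - Q x + 1 ≤ N - Q y := by have := hQ x; omega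
    have h2 := Nat.mul_le_mul_right (N + 1) h1
    have := hP x
    rw [hf, hf]
    nlinarith
  have hfP : ∀ x y, Q y ≤ Q x → P x < P y → f x < f y := by
    intro x y h hlt
    rcases h.lt_or_eq with h | h
    · exact hfQ x y h
    · rw [hf, hf, h]; omega
  have hsame : ∀ x y, (S x ↔ S y) → P x < P y → f x < f y := by
    intro x y hxy hlt
    refine hfP x y ?_ hlt
    by_contra h
    by_cases hy : S y
    · exact hS y x hy (hxy.mpr hy) hlt (not_le.mp h)
    · exact hT y x hy hlt (not_le.mp h)
  obtain ⟨p, hp⟩ := exists_unit_placement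
    (fun a b => ∃ s t, S s ∧ ¬ S t ∧ a ≤ f s ∧ f t ≤ b ∧ P s < P t)
    (fun a a' b b' ha hb ⟨s, t, hs, ht, h1, h2, h3⟩ =>
      ⟨s, t, hs, ht, ha.trans h1, h2.trans hb, h3⟩)
    (fun a ⟨s, t, hs, ht, h1, h2, h3⟩ => by
      refine absurd (hfP s t ?_ h3) (h2.trans h1).not_gt
      by_contra h
      exact hT t s ht h3 (not_le.mp h))
    (∑ x, f x + 1)
  have hlt : ∀ x, f x < ∑ x, f x + 1 := fun x =>
    Nat.lt_succ_of_le (Finset.single_le_sum (fun _ _ => Nat.zero_le _) (Finset.mem_univ x))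
  refine ⟨fun x => p (f x), ?_, ?_, ?_, ?_⟩
  · exact fun x y h => (hp _ (hlt x) _ (hlt y)).1 (hfQ x y h)
  · exact fun x y hxy h => (hp _ (hlt x) _ (hlt y)).1 (hsame x y hxy h)
  · exact fun s t hs ht h => (hp _ (hlt s) _ (hlt t)).2.1 ⟨s, t, hs, ht, le_rfl, le_rfl, h⟩
  · intro s t hs ht h
    refine (hp _ (hlt s) _ (hlt t)).2.2 ?_
    rintro ⟨s', t', hs', ht', h1, h2, h3⟩
    have h4 : P s ≤ P s' := by
      by_contra hc
      exact absurd (hsame s' s (iff_of_true hs' hs) (not_le.mp hc)) h1.not_gt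
    have h5 : P t' ≤ P t := by
      by_contra hc
      exact absurd (hsame t t' (iff_of_false ht ht') (not_le.mp hc)) h2.not_gt
    omega

/-! ### PP arcs and numbers of predecessors and successors -/

/-- An arc forces strict containment of intervals, hence strictly larger length. -/
theorem length_lt_of_ppArc {X : Type*} {lt : X → X → Prop} {ℓ r : X → ℝ}
    (hlt : ∀ x y, lt x y ↔ r x < ℓ y) {u v : X} (h : PPArc lt u v) :
    r u - ℓ u < r v - ℓ v := by
  obtain ⟨a, b, hbu, hua, ⟨-, -, hbv⟩, -, ⟨-, hva, -⟩⟩ := h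
  rw [hlt] at *
  linarith

/-- Number of predecessors. -/
noncomputable def predCard {X : Type*} (lt : X → X → Prop) (x : X) : ℕ := {b | lt b x}.ncard

/-- Number of successors. -/
noncomputable def succCard {X : Type*} (lt : X → X → Prop) (x : X) : ℕ := {a | lt x a}.ncard

section

variable {X : Type*} [Fintype X] {lt : X → X → Prop} {ℓ r : X → ℝ}

theorem predCard_lt (hlt : ∀ x y, lt x y ↔ r x < ℓ y) {b x y : X}
    (hx : ¬ lt b x) (hy : lt b y) : predCard lt x < predCard lt y := by
  refine Set.ncard_lt_ncard ⟨fun c (hc : lt c x) => ?_, fun h => hx (h hy)⟩ (Set.toFinite _)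
  change lt c y
  rw [hlt] at *
  linarith

theorem succCard_lt (hlt : ∀ x y, lt x y ↔ r x < ℓ y) {a x y : X}
    (hx : ¬ lt x a) (hy : lt y a) : succCard lt x < succCard lt y := by
  refine Set.ncard_lt_ncard ⟨fun c (hc : lt x c) => ?_, fun h => hx (h hy)⟩ (Set.toFinite _)
  change lt y c
  rw [hlt] at *
  linarith

theorem ppArc_of_card_lt (hle : ∀ x, ℓ x ≤ r x) (hlt : ∀ x y, lt x y ↔ r x < ℓ y) {x y : X}
    (hP : predCard lt y < predCard lt x) (hQ : succCard lt y < succCard lt x) :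
    PPArc lt x y := by
  obtain ⟨b, hbx, hby⟩ := Set.exists_mem_notMem_of_ncard_lt_ncard hP (Set.toFinite _)
  obtain ⟨a, hxa, hya⟩ := Set.exists_mem_notMem_of_ncard_lt_ncard hQ (Set.toFinite _)
  simp only [Set.mem_ofPred_eq] at hbx hby hxa hya
  have h1 := hle x
  have h2 := hle y
  have h3 := hle a
  have h4 := hle b
  refine ⟨a, b, hbx, hxa, ⟨?_, ?_, hby⟩, ⟨?_, ?_, ?_⟩, ⟨?_, hya, ?_⟩⟩ <;>
    first
    | rintro rfl
    | skip
  all_goals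
    simp only [hlt] at *
    linarith

/-! ### Representations in height three -/

/-- In height three, some point separates the minimal elements lying on its left from the maximal
elements lying on its right; it is a common point of the elements that are neither. -/
theorem exists_center (hlt : ∀ x y, lt x y ↔ r x < ℓ y)
    (h3 : ∃ a b c : X, lt a b ∧ lt b c)
    (h4 : ¬ ∃ a b c d : X, lt a b ∧ lt b c ∧ lt c d) :
    ∃ c : ℝ, (∀ x, r x < c → ∀ y, ¬ lt y x) ∧ (∀ x, c < ℓ x → ∀ y, ¬ lt x y) := by
  classical
  obtain ⟨a₀, b₀, c₀, h₁, h₂⟩ := h3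
  -- The rightmost left endpoint of an element that is neither minimal nor maximal.
  obtain ⟨m, ⟨⟨b, hb⟩, ⟨a, ha⟩⟩, hmax⟩ := Set.exists_max_image
    {x | (∃ b, lt b x) ∧ ∃ a, lt x a} ℓ (Set.toFinite _) ⟨b₀, ⟨a₀, h₁⟩, ⟨c₀, h₂⟩⟩
  refine ⟨ℓ m, fun x hx y hyx => ?_, fun x hx y hxy => ?_⟩
  · exact h4 ⟨y, x, m, a, hyx, (hlt _ _).mpr hx, ha⟩
  · have hbx : lt b x := by rw [hlt] at *; linarith
    exact absurd (hmax x ⟨⟨b, hbx⟩, ⟨y, hxy⟩⟩) (not_le.mpr hx)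

/-- Assembly of a representation with lengths `C` and `C + 1` out of the right endpoints of
`exists_right_endpoints` and the center of `exists_center`. -/
theorem exists_two_lengths (hle : ∀ x, ℓ x ≤ r x) (hlt : ∀ x y, lt x y ↔ r x < ℓ y)
    (h3 : ∃ a b c : X, lt a b ∧ lt b c)
    (h4 : ¬ ∃ a b c d : X, lt a b ∧ lt b c ∧ lt c d)
    (hpp : ¬ ∃ x y z : X, PPArc lt x y ∧ PPArc lt y z) :
    ∃ (C : ℝ) (ℓ' r' : X → ℝ), (∀ x, ℓ' x ≤ r' x) ∧ (∀ x y, lt x y ↔ r' x < ℓ' y) ∧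
      ∀ x, r' x - ℓ' x = C ∨ r' x - ℓ' x = C + 1 := by
  classical
  obtain ⟨c, hA, hB⟩ := exists_center hlt h3 h4
  obtain ⟨p, hQ, hPsame, hPst, hPts⟩ := exists_right_endpoints (fun x => ∃ y, PPArc lt x y)
    (predCard lt) (succCard lt) (Nat.card X) (fun x => Set.ncard_le_card _)
    (fun x => Set.ncard_le_card _)
    (fun t y ht h1 h2 => ht ⟨y, ppArc_of_card_lt hle hlt h1 h2⟩)
    (fun s s' _ ⟨z, hz⟩ h1 h2 => hpp ⟨s, s', z, ppArc_of_card_lt hle hlt h1 h2, hz⟩)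
  -- The left endpoints, up to the common translation by `C`.
  obtain ⟨e, he⟩ : ∃ e : X → ℝ, ∀ x, e x = if ∃ y, PPArc lt x y then p x else p x - 1 :=
    ⟨_, fun _ => rfl⟩
  have hP : ∀ x y, predCard lt x < predCard lt y → e x < e y := by
    intro x y h
    rw [he, he]
    by_cases hx : ∃ y, PPArc lt x y <;> by_cases hy : ∃ z, PPArc lt y z
    · simpa only [if_pos hx, if_pos hy] using hPsame x y (iff_of_true hx hy) h
    · rw [if_pos hx, if_neg hy]; linarith [hPst x y hx hy h]
    · rw [if_neg hx, if_pos hy]; linarith [hPts y x hy hx h]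
    · rw [if_neg hx, if_neg hy]; linarith [hPsame x y (iff_of_false hx hy) h]
  have hep : ∀ x, e x = p x ∨ e x = p x - 1 := fun x => by
    rw [he]; split_ifs <;> simp
  obtain ⟨K, hK⟩ : ∃ K : ℝ, ∀ x, -K ≤ p x ∧ p x ≤ K :=
    ⟨∑ x, |p x|, fun x => abs_le.mp
      (Finset.single_le_sum (f := fun x => |p x|) (fun _ _ => abs_nonneg _) (Finset.mem_univ x))⟩
  have hK' : ∀ x, -K - 1 ≤ e x ∧ e x ≤ K := fun x => by
    rcases hep x with h | h <;> constructor <;> linarith [(hK x).1, (hK x).2]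
  have hK0 : 0 ≤ K := by
    obtain ⟨a, -⟩ := h3
    linarith [(hK a).1, (hK a).2]
  -- Right endpoints of the elements left of the center, up to the translation by `C`.
  have hw : ∀ x, ∃ w : ℝ, (-K - 2 < w ∧ w < K + 1) ∧ (∀ z, ¬ lt x z → e z < w) ∧
      (∀ z, lt x z → w < e z) := by
    intro x
    obtain ⟨w, h1, h2⟩ := Order.exists_between_finsets
      (insert (-K - 2) ((Finset.univ.filter fun z => ¬ lt x z).image e))
      (insert (K + 1) ((Finset.univ.filter fun z => lt x z).image e)) (by
        simp only [Finset.mem_insert, Finset.mem_image, Finset.mem_filter, Finset.mem_univ,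
          true_and]
        rintro _ (rfl | ⟨z, hz, rfl⟩) _ (rfl | ⟨z', hz', rfl⟩)
        · linarith
        · linarith [(hK' z').1]
        · linarith [(hK' z).2]
        · exact hP z z' (predCard_lt hlt hz hz'))
    simp only [Finset.forall_mem_insert, Finset.forall_mem_image, Finset.mem_filter,
      Finset.mem_univ, true_and] at h1 h2
    exact ⟨w, ⟨h1.1, h2.1⟩, fun z hz => h1.2 hz, fun z hz => h2.2 hz⟩
  -- Left endpoints of the elements right of the center.
  have hv : ∀ x, ∃ v : ℝ, (-K - 1 < v ∧ v < K + 1) ∧ (∀ z, lt z x → p z < v) ∧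
      (∀ z, ¬ lt z x → v < p z) := by
    intro x
    obtain ⟨v, h1, h2⟩ := Order.exists_between_finsets
      (insert (-K - 1) ((Finset.univ.filter fun z => lt z x).image p))
      (insert (K + 1) ((Finset.univ.filter fun z => ¬ lt z x).image p)) (by
        simp only [Finset.mem_insert, Finset.mem_image, Finset.mem_filter, Finset.mem_univ,
          true_and]
        rintro _ (rfl | ⟨z, hz, rfl⟩) _ (rfl | ⟨z', hz', rfl⟩)
        · linarith
        · linarith [(hK z').1]
        · linarith [(hK z).2]
        · exact hQ z z' (succCard_lt hlt hz' hz))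
    simp only [Finset.forall_mem_insert, Finset.forall_mem_image, Finset.mem_filter,
      Finset.mem_univ, true_and] at h1 h2
    exact ⟨v, ⟨h1.1, h2.1⟩, fun z hz => h1.2 hz, fun z hz => h2.2 hz⟩
  choose w hwK hw1 hw2 using hw
  choose v hvK hv1 hv2 using hv
  -- `C` exceeds every difference of two of the numbers `e`, `p`, `w`, `v`.
  obtain ⟨C, hC⟩ : ∃ C : ℝ, C = 2 * K + 4 := ⟨_, rfl⟩
  have hlen : ∀ x, ((if r x < c then w x - C else if c < ℓ x then v x + C else p x) -
      (if r x < c then w x - 2 * C else if c < ℓ x then v x else e x - C) = C) ∨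
      ((if r x < c then w x - C else if c < ℓ x then v x + C else p x) -
      (if r x < c then w x - 2 * C else if c < ℓ x then v x else e x - C) = C + 1) := by
    intro x
    split_ifs
    · left; ring
    · left; ring
    · rcases hep x with h | h <;> rw [h]
      · left; ring
      · right; ring
  refine ⟨C, fun x => if r x < c then w x - 2 * C else if c < ℓ x then v x else e x - C,
    fun x => if r x < c then w x - C else if c < ℓ x then v x + C else p x,
    fun x => ?_, fun x y => ?_, hlen⟩
  · rcases hlen x with h | h <;> linarith
  · have := hwK x
    have := hwK y
    have := hvK x
    have := hvK y
    have := hK x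
    have := hK' y
    dsimp only
    by_cases hxA : r x < c
    · rw [if_pos hxA]
      by_cases hyA : r y < c
      · rw [if_pos hyA]
        exact iff_of_false (hA y hyA x) (by linarith)
      rw [if_neg hyA]
      by_cases hyB : c < ℓ y
      · rw [if_pos hyB]
        exact iff_of_true ((hlt x y).mpr (by linarith)) (by linarith)
      rw [if_neg hyB, sub_lt_sub_iff_right]
      refine ⟨hw2 x y, fun h => ?_⟩
      by_contra hxy
      exact absurd (hw1 x y hxy) h.not_gt
    rw [if_neg hxA]
    by_cases hxB : c < ℓ x
    · rw [if_pos hxB]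
      refine iff_of_false (hB x hxB y) ?_
      split_ifs <;> linarith
    rw [if_neg hxB]
    by_cases hyA : r y < c
    · rw [if_pos hyA]
      exact iff_of_false (hA y hyA x) (by linarith)
    rw [if_neg hyA]
    by_cases hyB : c < ℓ y
    · rw [if_pos hyB]
      refine ⟨hv1 y x, fun h => ?_⟩
      by_contra hxy
      exact absurd (hv2 y x hxy) h.not_gt
    · rw [if_neg hyB, hlt]
      exact iff_of_false (by linarith) (by linarith)

end

/-- A finite interval order of height exactly 3 (it has a 3-element chain but
no 4-element chain) admits an interval representation with at most 2 distinct
interval lengths if and only if its PP digraph has no directed path on 3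
vertices, i.e. the order has depth at most 2. -/
theorem height_three_two_count_iff_depth_le_two {X : Type*} [Fintype X]
    (lt : X → X → Prop)
    (hio : ∃ ℓ r : X → ℝ, (∀ x, ℓ x ≤ r x) ∧ ∀ x y, lt x y ↔ r x < ℓ y)
    (h3 : ∃ a b c : X, lt a b ∧ lt b c)
    (h4 : ¬ ∃ a b c d : X, lt a b ∧ lt b c ∧ lt c d) :
    (∃ ℓ r : X → ℝ, (∀ x, ℓ x ≤ r x) ∧ (∀ x y, lt x y ↔ r x < ℓ y) ∧
      Set.ncard {d : ℝ | ∃ x : X, d = r x - ℓ x} ≤ 2) ↔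
    ¬ ∃ x y z : X, PPArc lt x y ∧ PPArc lt y z := by
  constructor
  · rintro ⟨ℓ, r, -, hlt, hcard⟩ ⟨x, y, z, hxy, hyz⟩
    have h1 := length_lt_of_ppArc hlt hxy
    have h2 := length_lt_of_ppArc hlt hyz
    have hfin : {d : ℝ | ∃ x : X, d = r x - ℓ x}.Finite :=
      (Set.finite_range fun x => r x - ℓ x).subset fun d ⟨x, hx⟩ => ⟨x, hx.symm⟩
    exact absurd ((Set.two_lt_ncard_iff hfin).mpr
      ⟨_, _, _, ⟨x, rfl⟩, ⟨y, rfl⟩, ⟨z, rfl⟩, h1.ne, (h1.trans h2).ne, h2.ne⟩) hcard.not_gt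
  · intro hpp
    obtain ⟨ℓ, r, hle, hlt⟩ := hio
    obtain ⟨C, ℓ', r', hle', hlt', hlen⟩ := exists_two_lengths hle hlt h3 h4 hpp
    refine ⟨ℓ', r', hle', hlt', le_trans (Set.ncard_le_ncard (t := {C, C + 1}) ?_ ?_)
      ((Set.ncard_insert_le C {C + 1}).trans (by rw [Set.ncard_singleton]))⟩
    · rintro d ⟨x, rfl⟩
      exact hlen x
    · exact Set.toFinite _
end
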